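/- Let φ : ℂ → ℂ be analytic on the open disk {t : |t − 1| < R} for some R > 1, and let a, d be complex numbers such that 2a+1 and d are not nonpositive integers, d ≠ 0, and a + 1/2 is not a nonpositive integer or zero. Suppose the double series Σ_{k≥0} Σ_{n≥k} [2^k (a)_k (d+1)_k / ((2a+1)_k (d)_k k!)] · [(−1)^n (−n)_k / n!] · φ^{(n)}(1) is absolutely summable (so the order of summation may be interchanged). Then Σ_{k=0}^∞ 2^k (a)_k (d+1)_k φ^{(k)}(0) / ((2a+1)_k (d)_k k!) = Σ_{k=0}^∞ φ^{(2k)}(1) / (2^{2k} (a+1/2)_k k!) − ((1 − 2a/d)/(2a+1)) · Σ_{k=0}^∞ φ^{(2k+1)}(1) / (2^{2k} (a+3/2)_k k!). -/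

import Mathlib

/-- The Pochhammer symbol `(a)_k = a (a+1) ⋯ (a+k-1)`. -/
noncomputable def poch (a : ℂ) (k : ℕ) : ℂ := Polynomial.eval a (ascPochhammer ℂ k)

open Polynomial in
/-- The linear functional on polynomials with moments `μ`. -/
noncomputable def momL (μ : ℕ → ℂ) : ℂ[X] →ₗ[ℂ] ℂ :=
  Polynomial.lsum (fun k => (μ k) • (LinearMap.id : ℂ →ₗ[ℂ] ℂ))

open Polynomial in
lemma momL_monomial (μ : ℕ → ℂ) (k : ℕ) (c : ℂ) : momL μ (monomial k c) = μ k * c := by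
  simp [momL, Polynomial.lsum_apply, Polynomial.sum_monomial_index]

open Polynomial in
/-- The polynomial `1 - 2 X`. -/
noncomputable def uPol : ℂ[X] := C (-2) * X + 1

open Polynomial in
lemma momL_uPol (μ : ℕ → ℂ) (n : ℕ) : momL μ (uPol ^ n) =
    ∑ k ∈ Finset.range (n + 1), (-2) ^ k * (n.choose k : ℂ) * μ k := by
  unfold uPol
  rw [add_pow, map_sum]
  refine Finset.sum_congr rfl fun k _ => ?_
  have : (C (-2) * X) ^ k * 1 ^ (n - k) * ((n.choose k : ℕ) : ℂ[X])
      = monomial k ((-2) ^ k * (n.choose k : ℂ)) := by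
    rw [← C_mul_X_pow_eq_monomial, mul_pow, C_mul, C_pow, one_pow, ← C_eq_natCast]
    simp only [map_natCast]
    ring
  rw [this, momL_monomial]
  ring

lemma poch_zero (a : ℂ) : poch a 0 = 1 := by simp [poch]

lemma poch_succ (a : ℂ) (k : ℕ) : poch a (k + 1) = poch a k * (a + k) := by
  simp [poch, ascPochhammer_succ_eval]

lemma poch_succ_left (a : ℂ) (k : ℕ) : poch a (k + 1) = a * poch (a + 1) k := by
  simp [poch, ascPochhammer_succ_left]

lemma poch_ne (a : ℂ) (h : ∀ n : ℕ, a ≠ -(n : ℂ)) (k : ℕ) : poch a k ≠ 0 := by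
  induction k with
  | zero => simp [poch_zero]
  | succ k ih =>
    rw [poch_succ]
    refine mul_ne_zero ih fun h0 => h k ?_
    linear_combination h0

lemma poch_neg_nat (k m : ℕ) :
    poch (-((k + m : ℕ) : ℂ)) k * (m.factorial : ℂ) = (-1) ^ k * ((k + m).factorial : ℂ) := by
  rw [poch, ascPochhammer_eval_neg_eq_descPochhammer, descPochhammer_eval_eq_descFactorial]
  have := Nat.factorial_mul_descFactorial (n := k + m) (k := k) (by omega)
  rw [show k + m - k = m by omega] at this
  rw [← this]
  push_cast
  ring

section G

open Polynomial

lemma momL_ibp (b : ℂ) (hb : ∀ n : ℕ, 2 * b ≠ -(n : ℂ)) (p : ℂ[X]) :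
    momL (fun k => poch b k / poch (2 * b) k)
      (C b * (uPol * p) + X * (1 - X) * derivative p) = 0 := by
  induction p using Polynomial.induction_on' with
  | add p q hp hq =>
    have e : C b * (uPol * (p + q)) + X * (1 - X) * derivative (p + q) =
        (C b * (uPol * p) + X * (1 - X) * derivative p) +
        (C b * (uPol * q) + X * (1 - X) * derivative q) := by
      rw [derivative_add]; ring
    rw [e, map_add, hp, hq, add_zero]
  | monomial j c =>
    have e : C b * (uPol * monomial j c) + X * (1 - X) * derivative (monomial j c)
        = monomial j ((b + j) * c) - monomial (j + 1) ((2 * b + j) * c) := by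
      unfold uPol
      rcases j with _ | j
      · simp only [← C_mul_X_pow_eq_monomial, derivative_C_mul, derivative_X_pow, C_mul, C_add, C_neg]
        simp
        ring
      · simp only [← C_mul_X_pow_eq_monomial, derivative_C_mul, derivative_X_pow, C_mul, C_add, C_neg]
        simp
        ring
    rw [e, map_sub, momL_monomial, momL_monomial]
    have h1 := poch_ne _ hb j
    have h2 : 2 * b + j ≠ 0 := fun h => hb j (by linear_combination h)
    rw [poch_succ, poch_succ]
    field_simp
    ring

lemma derivative_uPol_pow (n : ℕ) :
    derivative (uPol ^ n) = C (-2 * (n : ℂ)) * uPol ^ (n - 1) := by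
  unfold uPol
  rw [derivative_pow]
  simp
  ring

lemma G_one (b : ℂ) (hb : ∀ n : ℕ, 2 * b ≠ -(n : ℂ)) :
    momL (fun k => poch b k / poch (2 * b) k) (uPol ^ 1) = 0 := by
  have h0 : 2 * b ≠ 0 := by simpa using hb 0
  rw [momL_uPol]
  simp [Finset.sum_range_succ, poch_zero, poch_succ]
  field_simp
  have : b ≠ 0 := by simpa using h0
  field_simp
  ring

lemma G_rec (b : ℂ) (hb : ∀ n : ℕ, 2 * b ≠ -(n : ℂ)) (n : ℕ) :
    (2 * b + n + 1) * momL (fun k => poch b k / poch (2 * b) k) (uPol ^ (n + 2)) =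
    (n + 1) * momL (fun k => poch b k / poch (2 * b) k) (uPol ^ n) := by
  have h := momL_ibp b hb (uPol ^ (n + 1))
  have e : C b * (uPol * uPol ^ (n + 1)) + X * (1 - X) * derivative (uPol ^ (n + 1))
      = (b + (n + 1) / 2) • uPol ^ (n + 2) - (((n : ℂ) + 1) / 2) • uPol ^ n := by
    rw [derivative_uPol_pow, smul_eq_C_mul, smul_eq_C_mul, Nat.add_sub_cancel]
    have hX : C (4 : ℂ) * (X * (1 - X)) = 1 - uPol ^ 2 := by
      unfold uPol
      simp only [C_neg]
      have : (C (4 : ℂ)) = C 2 * C 2 := by rw [← C_mul]; norm_num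
      have h2 : (C (2 : ℂ)) = 2 := rfl
      rw [this, h2]
      ring
    have h3 : C (-2 * ((n + 1 : ℕ) : ℂ)) = - C (((n : ℂ) + 1) / 2) * C 4 := by
      rw [← C_neg, ← C_mul]; congr 1; push_cast; ring
    rw [h3, C_add]
    linear_combination (-C (((n : ℂ) + 1) / 2) * uPol ^ n) * hX
  rw [e, map_sub, map_smul, map_smul, smul_eq_mul, smul_eq_mul] at h
  linear_combination 2 * h

lemma G_odd (b : ℂ) (hb : ∀ n : ℕ, 2 * b ≠ -(n : ℂ)) (m : ℕ) :
    momL (fun k => poch b k / poch (2 * b) k) (uPol ^ (2 * m + 1)) = 0 := by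
  induction m with
  | zero => exact G_one b hb
  | succ m ih =>
    have h := G_rec b hb (2 * m + 1)
    rw [ih, mul_zero] at h
    refine (mul_eq_zero.mp h).resolve_left fun h0 => hb (2 * m + 2) ?_
    push_cast at h0 ⊢
    linear_combination h0

lemma G_even (b : ℂ) (hb : ∀ n : ℕ, 2 * b ≠ -(n : ℂ)) (m : ℕ) :
    momL (fun k => poch b k / poch (2 * b) k) (uPol ^ (2 * m))
      = poch (1 / 2) m / poch (b + 1 / 2) m := by
  have hb2 : ∀ n : ℕ, b + 1 / 2 ≠ -(n : ℂ) := fun n h => hb (2 * n + 1) (by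
    push_cast; linear_combination 2 * h)
  induction m with
  | zero => rw [Nat.mul_zero, momL_uPol]; simp [poch_zero]
  | succ m ih =>
    have h := G_rec b hb (2 * m)
    rw [ih] at h
    have h1 := poch_ne _ hb2 m
    have h2 : b + 1 / 2 + m ≠ 0 := fun h => hb2 m (by linear_combination h)
    rw [poch_succ, poch_succ, show 2 * (m + 1) = 2 * m + 2 by ring]
    rw [eq_div_iff (mul_ne_zero h1 h2)]
    have h3 : poch (1 / 2) m / poch (b + 1 / 2) m * poch (b + 1 / 2) m = poch (1 / 2) m :=
      div_mul_cancel₀ _ h1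
    push_cast at h
    linear_combination (poch (b + 1 / 2) m / 2) * h + (m + 1 / 2) * h3

/-- shift: `L'(X p) = a/(2a+1) L(p)`. -/
lemma momL_shift (a : ℂ) (p : ℂ[X]) :
    momL (fun k => poch a k / poch (2 * a + 1) k) (X * p) =
    a / (2 * a + 1) * momL (fun k => poch (a + 1) k / poch (2 * (a + 1)) k) p := by
  induction p using Polynomial.induction_on' with
  | add p q hp hq => rw [mul_add, map_add, map_add, hp, hq]; ring
  | monomial j c =>
    rw [X_mul_monomial, momL_monomial, momL_monomial, poch_succ_left, poch_succ_left,
      show 2 * a + 1 + 1 = 2 * (a + 1) by ring, mul_div_mul_comm]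
    ring

lemma S_succ (a : ℂ) (n : ℕ) :
    momL (fun k => poch a k / poch (2 * a + 1) k) (uPol ^ (n + 1)) =
    momL (fun k => poch a k / poch (2 * a + 1) k) (uPol ^ n) - 2 * (a / (2 * a + 1)) *
      momL (fun k => poch (a + 1) k / poch (2 * (a + 1)) k) (uPol ^ n) := by
  have : uPol ^ (n + 1) = uPol ^ n + (-2 : ℂ) • (X * uPol ^ n) := by
    rw [smul_eq_C_mul, pow_succ]; nth_rewrite 2 [uPol]; ring
  rw [this, map_add, map_smul, momL_shift, smul_eq_mul]
  ring

lemma S_even (a : ℂ) (h2a1 : ∀ n : ℕ, 2 * a + 1 ≠ -(n : ℂ)) (m : ℕ) :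
    momL (fun k => poch a k / poch (2 * a + 1) k) (uPol ^ (2 * m))
      = poch (1 / 2) m / poch (a + 1 / 2) m ∧
    momL (fun k => poch a k / poch (2 * a + 1) k) (uPol ^ (2 * m + 1))
      = poch (1 / 2) (m + 1) / poch (a + 1 / 2) (m + 1) := by
  have hb : ∀ n : ℕ, 2 * (a + 1) ≠ -(n : ℂ) := fun n h => h2a1 (n + 1) (by
    push_cast; linear_combination h)
  have hb2 : ∀ n : ℕ, a + 1 / 2 ≠ -(n : ℂ) := fun n h => h2a1 (2 * n) (by
    push_cast; linear_combination 2 * h)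
  have h21 : 2 * a + 1 ≠ 0 := by simpa using h2a1 0
  have key : ∀ m, momL (fun k => poch a k / poch (2 * a + 1) k) (uPol ^ (2 * m))
      = poch (1 / 2) m / poch (a + 1 / 2) m →
      momL (fun k => poch a k / poch (2 * a + 1) k) (uPol ^ (2 * m + 1))
      = poch (1 / 2) (m + 1) / poch (a + 1 / 2) (m + 1) := by
    intro m h
    rw [S_succ, h, G_even _ hb]
    have h1 := poch_ne _ hb2 m
    have h2 : a + 1 / 2 + m ≠ 0 := fun h => hb2 m (by linear_combination h)
    have h4 := poch_succ_left (a + 1 / 2) m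
    rw [poch_succ, show a + 1 / 2 + 1 = a + 1 + 1 / 2 by ring] at h4
    have h5 : a + 1 / 2 ≠ 0 := by simpa using hb2 0
    have h6 : poch (a + 1 + 1 / 2) m = poch (a + 1 / 2) m * (a + 1 / 2 + m) / (a + 1 / 2) := by
      rw [eq_div_iff h5]; linear_combination -h4
    rw [h6, poch_succ, poch_succ, show 2 * a + 1 = 2 * (a + 1 / 2) by ring]
    have h7 : a = a + 1 / 2 + m - (1 / 2 + m) := by ring
    have h8 : poch (1 / 2) m / poch (a + 1 / 2) m - 2 * (a / (2 * (a + 1 / 2))) *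
        (poch (1 / 2) m / (poch (a + 1 / 2) m * (a + 1 / 2 + m) / (a + 1 / 2))) =
        poch (1 / 2) m / poch (a + 1 / 2) m * (1 - a / (a + 1 / 2 + m)) := by
      generalize a + 1 / 2 + (m : ℂ) = w at *
      generalize poch (a + 1 / 2) m = v at *
      generalize a + 1 / 2 = z at *
      field_simp
    have h9 : 1 - a / (a + 1 / 2 + m) = (1 / 2 + m) / (a + 1 / 2 + m) := by
      rw [eq_div_iff h2, sub_mul, div_mul_cancel₀ _ h2]; ring
    rw [h8, h9, div_mul_div_comm]
  induction m with
  | zero =>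
    have h0 : momL (fun k => poch a k / poch (2 * a + 1) k) (uPol ^ (2 * 0))
      = poch (1 / 2) 0 / poch (a + 1 / 2) 0 := by
      rw [Nat.mul_zero, momL_uPol]; simp [poch_zero]
    exact ⟨h0, key 0 h0⟩
  | succ m ih =>
    have h0 : momL (fun k => poch a k / poch (2 * a + 1) k) (uPol ^ (2 * (m + 1)))
      = poch (1 / 2) (m + 1) / poch (a + 1 / 2) (m + 1) := by
      rw [show 2 * (m + 1) = (2 * m + 1) + 1 by ring, S_succ, G_odd _ hb, ih.2]; simp
    exact ⟨h0, key _ h0⟩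

/-- the weighted functional -/
lemma momL_weight (μ : ℕ → ℂ) (d : ℂ) (p : ℂ[X]) :
    momL (fun k => μ k * (1 + k / d)) p = momL μ p + 1 / d * momL μ (X * derivative p) := by
  induction p using Polynomial.induction_on' with
  | add p q hp hq => rw [derivative_add, mul_add, map_add, map_add, map_add, hp, hq]; ring
  | monomial j c =>
    rw [derivative_monomial, X_mul_monomial, momL_monomial, momL_monomial, momL_monomial]
    rcases j with _ | j
    · simp
    · simp
      ring

lemma F_eq (a d : ℂ) (n : ℕ) :
    momL (fun k => poch a k / poch (2 * a + 1) k * (1 + k / d)) (uPol ^ n) =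
    momL (fun k => poch a k / poch (2 * a + 1) k) (uPol ^ n)
     - 2 * n / d * (a / (2 * a + 1)) *
      momL (fun k => poch (a + 1) k / poch (2 * (a + 1)) k) (uPol ^ (n - 1)) := by
  rw [momL_weight, derivative_uPol_pow, show X * (C (-2 * (n : ℂ)) * uPol ^ (n - 1)) =
    (-2 * (n : ℂ)) • (X * uPol ^ (n - 1)) by rw [smul_eq_C_mul]; ring, map_smul, momL_shift,
    smul_eq_mul]
  ring

lemma poch_half (m : ℕ) : poch (1 / 2) m * (2 ^ (2 * m) * (m.factorial : ℂ)) =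
    ((2 * m).factorial : ℂ) := by
  induction m with
  | zero => simp [poch_zero]
  | succ m ih =>
    rw [show 2 * (m + 1) = 2 * m + 1 + 1 by ring, Nat.factorial_succ, Nat.factorial_succ,
      Nat.factorial_succ, poch_succ]
    push_cast
    rw [← ih]
    ring

lemma F_even (a d : ℂ) (h2a1 : ∀ n : ℕ, 2 * a + 1 ≠ -(n : ℂ)) (m : ℕ) :
    momL (fun k => poch a k / poch (2 * a + 1) k * (1 + k / d)) (uPol ^ (2 * m)) =
      poch (1 / 2) m / poch (a + 1 / 2) m := by
  have hb : ∀ n : ℕ, 2 * (a + 1) ≠ -(n : ℂ) := fun n h => h2a1 (n + 1) (by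
    push_cast; linear_combination h)
  rw [F_eq, (S_even a h2a1 m).1]
  rcases m with _ | m
  · simp
  · rw [show 2 * (m + 1) - 1 = 2 * m + 1 by omega, G_odd _ hb]; simp

lemma F_odd (a d : ℂ) (hd0 : d ≠ 0) (h2a1 : ∀ n : ℕ, 2 * a + 1 ≠ -(n : ℂ)) (m : ℕ) :
    momL (fun k => poch a k / poch (2 * a + 1) k * (1 + k / d)) (uPol ^ (2 * m + 1)) =
      (1 - 2 * a / d) / (2 * a + 1) * ((2 * m + 1) * poch (1 / 2) m / poch (a + 3 / 2) m) := by
  have hb : ∀ n : ℕ, 2 * (a + 1) ≠ -(n : ℂ) := fun n h => h2a1 (n + 1) (by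
    push_cast; linear_combination h)
  have hb2 : ∀ n : ℕ, a + 1 / 2 + 1 ≠ -(n : ℂ) := fun n h => h2a1 (2 * n + 2) (by
    push_cast; linear_combination 2 * h)
  have h21 : 2 * a + 1 ≠ 0 := by simpa using h2a1 0
  have h1 := poch_ne _ hb2 m
  rw [F_eq, (S_even a h2a1 m).2, Nat.add_sub_cancel, G_even _ hb, poch_succ, poch_succ_left,
    show a + 1 + 1 / 2 = a + 3 / 2 by ring]
  rw [show a + 1 / 2 + 1 = a + 3 / 2 by ring] at *
  rw [show a + 1 / 2 = (2 * a + 1) / 2 by ring]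
  push_cast
  field_simp
  ring

end G

lemma taylor_zero (φ : ℂ → ℂ) (R : ℝ) (hR : 1 < R)
    (hφ : AnalyticOnNhd ℂ φ (Metric.ball (1 : ℂ) R)) (k : ℕ) :
    ∑' m : ℕ, (-1 : ℂ) ^ m / (m.factorial : ℂ) * iteratedDeriv (k + m) φ 1
      = iteratedDeriv k φ 0 := by
  have h : DifferentiableOn ℂ (iteratedDeriv k φ) (Metric.ball (1 : ℂ) R) := by
    rw [iteratedDeriv_eq_iterate]
    exact (hφ.iterated_deriv k).differentiableOn
  have h2 := Complex.taylorSeries_eq_on_ball (c := 1) (r := R) (z := 0) (f := iteratedDeriv k φ) h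
    (by simpa using hR)
  rw [← h2]
  refine tsum_congr fun m => ?_
  have : iteratedDeriv m (iteratedDeriv k φ) = iteratedDeriv (k + m) φ := by
    simp only [iteratedDeriv_eq_iterate, ← Function.iterate_add_apply, add_comm]
  rw [this]
  simp only [smul_eq_mul, zero_sub]
  ring

lemma poch_ratio (d : ℂ) (hd : ∀ n : ℕ, d ≠ -(n : ℂ)) (hd0 : d ≠ 0) (k : ℕ) :
    poch (d + 1) k / poch d k = 1 + k / d := by
  have h := poch_succ_left d k
  rw [poch_succ] at h
  have := poch_ne d hd k
  field_simp
  linear_combination -h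

lemma alg_even (N D w v M : ℂ) (hN : N ≠ 0) (hw : w ≠ 0) (hv : v ≠ 0) (hM : M ≠ 0) :
    1 / N * D * (N / (w * M) / v) = D / (w * v * M) := by
  field_simp

lemma alg_odd (N D w v M q t : ℂ) (hN : N ≠ 0) (hw : w ≠ 0) (hv : v ≠ 0) (hM : M ≠ 0)
    (ht : t ≠ 0) :
    1 * -1 / (t * N) * D * (q * (t * (N / (w * M)) / v)) = -q * (D / (w * v * M)) := by
  field_simp

/-- Summation of a double series along antidiagonals. -/
lemma anti_sum (f : ℕ × ℕ → ℂ) (hs : Summable f) (g : ℕ → ℂ)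
    (hanti : ∀ n : ℕ, ∑ p ∈ Finset.HasAntidiagonal.antidiagonal n, f p = g n) :
    ∑' p, f p = ∑' n, g (2 * n) + ∑' n, g (2 * n + 1) := by
  have hs' := Finset.HasAntidiagonal.sigmaAntidiagonalEquivProd.summable_iff.mpr hs
  have hin : ∀ n : ℕ, ∑' p : Finset.HasAntidiagonal.antidiagonal n, f p.1 =
      g n := by
    intro n
    rw [← hanti n]
    exact Finset.tsum_subtype _ f
  have hsn : Summable fun n : ℕ => g n := by
    have := hs'.sigma
    refine this.congr fun n => ?_
    rw [← hin n]
    rfl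
  have hR' : ∑' p, f p = ∑' n : ℕ, g n := by
    rw [← Finset.HasAntidiagonal.sigmaAntidiagonalEquivProd.tsum_eq f]
    refine (Summable.tsum_sigma hs').trans ?_
    refine tsum_congr fun n => ?_
    rw [← hin n]
    rfl
  have he : Summable fun n : ℕ => g (2 * n) :=
    hsn.comp_injective (i := fun n : ℕ => 2 * n) (fun x y h => by simpa using h)
  have ho : Summable fun n : ℕ => g (2 * n + 1) :=
    hsn.comp_injective (i := fun n : ℕ => 2 * n + 1) (fun x y h => by simpa using h)
  rw [hR', tsum_even_add_odd he ho]

/-- Generalization of Ramanujan's Entry 8 (Theorem 2 of the paper): if `φ` is analytic on a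
disk of radius `R > 1` about `1` and the double series may be summed in either order, then
`Σ_{k≥0} 2^k (a)_k (d+1)_k φ^{(k)}(0) / ((2a+1)_k (d)_k k!)
  = Σ_{k≥0} φ^{(2k)}(1) / (2^{2k} (a+1/2)_k k!)
    - ((1-2a/d)/(2a+1)) Σ_{k≥0} φ^{(2k+1)}(1) / (2^{2k} (a+3/2)_k k!)`. -/
theorem ramanujan_entry8_generalization
    (φ : ℂ → ℂ) (R : ℝ) (hR : 1 < R)
    (hφ : AnalyticOnNhd ℂ φ (Metric.ball (1 : ℂ) R))
    (a d : ℂ)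
    (h2a1 : ∀ n : ℕ, 2 * a + 1 ≠ -(n : ℂ))
    (hd : ∀ n : ℕ, d ≠ -(n : ℂ))
    (hd0 : d ≠ 0)
    (ha : ∀ n : ℕ, a + 1 / 2 ≠ -(n : ℂ))
    (hsum : Summable (fun p : ℕ × ℕ =>
      ‖(2 ^ p.1 * poch a p.1 * poch (d + 1) p.1 /
          (poch (2 * a + 1) p.1 * poch d p.1 * (Nat.factorial p.1 : ℂ))) *
        ((-1 : ℂ) ^ (p.1 + p.2) * poch (-(((p.1 + p.2 : ℕ)) : ℂ)) p.1 /
          (Nat.factorial (p.1 + p.2) : ℂ)) * iteratedDeriv (p.1 + p.2) φ 1‖)) :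
    ∑' k : ℕ, 2 ^ k * poch a k * poch (d + 1) k * iteratedDeriv k φ 0 /
        (poch (2 * a + 1) k * poch d k * (Nat.factorial k : ℂ))
      = (∑' k : ℕ, iteratedDeriv (2 * k) φ 1 /
            (2 ^ (2 * k) * poch (a + 1 / 2) k * (Nat.factorial k : ℂ)))
        - ((1 - 2 * a / d) / (2 * a + 1)) *
          ∑' k : ℕ, iteratedDeriv (2 * k + 1) φ 1 /
            (2 ^ (2 * k) * poch (a + 3 / 2) k * (Nat.factorial k : ℂ)) := by
  set F : ℕ → ℂ := fun n =>
    momL (fun k => poch a k / poch (2 * a + 1) k * (1 + k / d)) (uPol ^ n) with hF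
  set f : ℕ × ℕ → ℂ := fun p => (2 ^ p.1 * poch a p.1 * poch (d + 1) p.1 /
          (poch (2 * a + 1) p.1 * poch d p.1 * (Nat.factorial p.1 : ℂ))) *
        ((-1 : ℂ) ^ (p.1 + p.2) * poch (-(((p.1 + p.2 : ℕ)) : ℂ)) p.1 /
          (Nat.factorial (p.1 + p.2) : ℂ)) * iteratedDeriv (p.1 + p.2) φ 1 with hf
  have hs : Summable f := hsum.of_norm
  have hfe : ∀ k m : ℕ, f (k, m) = (2 ^ k * poch a k * poch (d + 1) k /
      (poch (2 * a + 1) k * poch d k * (Nat.factorial k : ℂ))) *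
      ((-1 : ℂ) ^ m / (m.factorial : ℂ) * iteratedDeriv (k + m) φ 1) := by
    intro k m
    simp only [hf]
    rw [mul_assoc]
    congr 2
    have h := poch_neg_nat k m
    have h1 : (m.factorial : ℂ) ≠ 0 := by exact_mod_cast m.factorial_ne_zero
    have h2 : ((k + m).factorial : ℂ) ≠ 0 := by exact_mod_cast (k + m).factorial_ne_zero
    rw [div_eq_div_iff h2 h1, mul_assoc, h, pow_add]
    have h3 : (-1 : ℂ) ^ k * (-1) ^ k = 1 := by rw [← mul_pow]; simp
    linear_combination ((-1) ^ m * ((k + m).factorial : ℂ)) * h3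
  have hL : ∑' k : ℕ, 2 ^ k * poch a k * poch (d + 1) k * iteratedDeriv k φ 0 /
        (poch (2 * a + 1) k * poch d k * (Nat.factorial k : ℂ)) = ∑' p, f p := by
    rw [hs.tsum_prod]
    refine tsum_congr fun k => ?_
    simp only [hfe]
    rw [tsum_mul_left, taylor_zero φ R hR hφ]
    ring
  have hanti : ∀ n : ℕ, ∑ p ∈ Finset.HasAntidiagonal.antidiagonal n, f p =
      (-1) ^ n / (n.factorial : ℂ) * iteratedDeriv n φ 1 * F n := by
    intro n
    rw [Finset.Nat.sum_antidiagonal_eq_sum_range_succ_mk, hF]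
    simp only [momL_uPol]
    rw [Finset.mul_sum]
    refine Finset.sum_congr rfl fun k hk => ?_
    have hkn : k ≤ n := by simpa [Nat.lt_succ_iff] using hk
    obtain ⟨m, rfl⟩ := Nat.exists_eq_add_of_le hkn
    rw [show k + m - k = m by omega, hfe, ← poch_ratio d hd hd0]
    have hc : (((k + m).choose k : ℕ) : ℂ) =
        ((k + m).factorial : ℂ) / ((k.factorial : ℂ) * (m.factorial : ℂ)) := by
      rw [Nat.cast_choose ℂ hkn, show k + m - k = m by omega]
    have h1 : (m.factorial : ℂ) ≠ 0 := by exact_mod_cast m.factorial_ne_zero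
    have h2 : ((k + m).factorial : ℂ) ≠ 0 := by exact_mod_cast (k + m).factorial_ne_zero
    have h4 : (k.factorial : ℂ) ≠ 0 := by exact_mod_cast k.factorial_ne_zero
    have h5 := poch_ne _ h2a1 k
    have h6 := poch_ne _ hd k
    have h3 : (-1 : ℂ) ^ k * (-1) ^ k = 1 := by rw [← mul_pow]; simp
    rw [hc, pow_add, show (-2 : ℂ) = (-1) * 2 by norm_num, mul_pow]
    field_simp
    have h7 : ((-1 : ℂ) ^ k) ^ 2 = 1 := by rw [sq, h3]
    simp [h7]
  have hR' := anti_sum f hs _ hanti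
  rw [hL, hR', sub_eq_add_neg, ← neg_mul, ← tsum_mul_left]
  have hb3 : ∀ n : ℕ, a + 3 / 2 ≠ -(n : ℂ) := fun n h => ha (n + 1) (by
    push_cast; linear_combination h)
  congr 1
  · refine tsum_congr fun m => ?_
    have h0 := poch_half m
    have h1 : (m.factorial : ℂ) ≠ 0 := by exact_mod_cast m.factorial_ne_zero
    have h2 : ((2 * m).factorial : ℂ) ≠ 0 := by exact_mod_cast (2 * m).factorial_ne_zero
    have h3 := poch_ne _ ha m
    simp only [hF]
    rw [F_even a d h2a1, pow_mul, neg_one_sq, one_pow]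
    have h4 : (2 : ℂ) ^ (2 * m) ≠ 0 := pow_ne_zero _ two_ne_zero
    have h5 : poch (1 / 2) m = ((2 * m).factorial : ℂ) / (2 ^ (2 * m) * (m.factorial : ℂ)) := by
      rw [eq_div_iff (mul_ne_zero h4 h1), h0]
    rw [h5]
    exact alg_even _ _ _ _ _ h2 h4 h3 h1
  · refine tsum_congr fun m => ?_
    have h0 := poch_half m
    have h1 : (m.factorial : ℂ) ≠ 0 := by exact_mod_cast m.factorial_ne_zero
    have h2 : ((2 * m).factorial : ℂ) ≠ 0 := by exact_mod_cast (2 * m).factorial_ne_zero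
    have h3 := poch_ne _ hb3 m
    simp only [hF]
    rw [F_odd a d hd0 h2a1, pow_succ, pow_mul, neg_one_sq, one_pow, Nat.factorial_succ]
    have h4 : (2 : ℂ) ^ (2 * m) ≠ 0 := pow_ne_zero _ two_ne_zero
    have h5 : poch (1 / 2) m = ((2 * m).factorial : ℂ) / (2 ^ (2 * m) * (m.factorial : ℂ)) := by
      rw [eq_div_iff (mul_ne_zero h4 h1), h0]
    have h6 : (2 * (m : ℂ) + 1) ≠ 0 := by exact_mod_cast (2 * m).succ_ne_zero
    rw [h5]
    push_cast
    exact alg_odd _ _ _ _ _ _ _ h2 h4 h3 h1 h6
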